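/- There exists a finite set G of unary constraints such that the binary constraint Implies = (1,1,0,1) is T-constructible from G ∪ {OR}, where OR = [0,1,1]. (Explicitly, G = {[1,−1/2], [2,−2/3], [1,−1/8]} works.) -/

import Mathlib

/-- A (complex-valued Boolean) constraint of arity `k`. -/
abbrev Constraint (k : ℕ) : Type := (Fin k → Bool) → ℂ

/-- The binary equality constraint `EQ = [1,0,1]`, as a two-argument function. -/
def EQc : Bool → Bool → ℂ := fun a b => if a = b then 1 else 0

/-- The binary disequality constraint `XOR = [0,1,0]`, as a two-argument function. -/
def XORc : Bool → Bool → ℂ := fun a b => if a = b then 0 else 1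

/-- The binary constraint `Implies = (1,1,0,1)`, as a two-argument function. -/
def IMPc : Bool → Bool → ℂ := fun a b => if a = true ∧ b = false then 0 else 1

/-- The unary constraint `[a, b]` (value `a` on input `0`, value `b` on input `1`). -/
def unC (a b : ℂ) : Constraint 1 := fun x => if x 0 then b else a

/-- The binary constraint `(a,b,c,d) = (f(0,0), f(0,1), f(1,0), f(1,1))`. -/
def binC (a b c d : ℂ) : Constraint 2 := fun x =>
  if x 0 then (if x 1 then d else c) else (if x 1 then b else a)

/-- `OR = [0,1,1]`. -/
def ORc : Constraint 2 := binC 0 1 1 1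

/-- `Implies = (1,1,0,1)` as a binary constraint. -/
def Impliesc : Constraint 2 := binC 1 1 0 1

/-- Membership in `NZ`: the constraint is everywhere nonzero. -/
def inNZ {k : ℕ} (f : Constraint k) : Prop := ∀ x, f x ≠ 0

/-- Membership in `DG`: the constraint is a product of unary constraints, one per variable. -/
def inDG {k : ℕ} (f : Constraint k) : Prop :=
  ∃ g : Fin k → Bool → ℂ, ∀ x, f x = ∏ i, g i (x i)

/-- Membership in `ED`: the constraint is a product of at least one factor, each factor
being a unary constraint applied to some variable, or `EQ`/`XOR` applied to two variables. -/
def inED {k : ℕ} (f : Constraint k) : Prop :=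
  ∃ (l1 l2 : ℕ) (h : Fin l1 → Bool → ℂ) (j : Fin l1 → Fin k)
    (g : Fin l2 → Bool → Bool → ℂ) (m n : Fin l2 → Fin k),
    1 ≤ l1 + l2 ∧ (∀ i, g i = EQc ∨ g i = XORc) ∧
    ∀ x, f x = (∏ i, h i (x (j i))) * ∏ i, g i (x (m i)) (x (n i))

/-- Membership in `IM`: `f ∉ NZ` and `f` is a product of at least one factor, each factor
being a unary constraint applied to some variable, or `Implies` applied to two variables. -/
def inIM {k : ℕ} (f : Constraint k) : Prop :=
  ¬ inNZ f ∧
  ∃ (l1 l2 : ℕ) (h : Fin l1 → Bool → ℂ) (j : Fin l1 → Fin k)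
    (m n : Fin l2 → Fin k),
    1 ≤ l1 + l2 ∧
    ∀ x, f x = (∏ i, h i (x (j i))) * ∏ i, IMPc (x (m i)) (x (n i))

/-- The underlying relation `R_f = {x : f x ≠ 0}` of a constraint `f`. -/
def relOf {k : ℕ} (f : Constraint k) : Set (Fin k → Bool) := {x | f x ≠ 0}

/-- Factors allowed in an IMP-style factorization of a relation:
`Δ_c(x_i)` or `Implies(x_i, x_j)`. -/
inductive ImpFactor (k : ℕ) where
  | delta (c : Bool) (i : Fin k)
  | imp (i j : Fin k)
deriving DecidableEq

/-- Evaluation of an IMP-factor at an assignment. -/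
def ImpFactor.eval {k : ℕ} : ImpFactor k → (Fin k → Bool) → Bool
  | .delta c i, x => x i == c
  | .imp i j, x => !(x i) || x j

/-- `L` is a factor list for the relation `R`: the conjunction of the factors in `L` equals `R`. -/
def isFactorListFor {k : ℕ} (L : List (ImpFactor k)) (R : Set (Fin k → Bool)) : Prop :=
  ∀ x, x ∈ R ↔ ∀ fac ∈ L, fac.eval x = true

/-- Membership in `IMP`: the relation is the conjunction of a positive number of factors of the
forms `Δ_0(x)`, `Δ_1(x)`, `Implies(x,y)`. -/
def inIMP {k : ℕ} (R : Set (Fin k → Bool)) : Prop :=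
  ∃ L : List (ImpFactor k), L ≠ [] ∧ isFactorListFor L R

/-- `f` has imp support when `R_f ∈ IMP`. -/
def hasImpSupport {k : ℕ} (f : Constraint k) : Prop := inIMP (relOf f)

/-- A factor list is imp-distinctive if no variable occurs both in a `Δ_c` factor and in an
`Implies` factor, and no factor `Implies(x,x)` occurs. -/
def impDistinctive {k : ℕ} (L : List (ImpFactor k)) : Prop :=
  (∀ i : Fin k, ¬ ((∃ c, ImpFactor.delta c i ∈ L) ∧
      (∃ j, ImpFactor.imp i j ∈ L ∨ ImpFactor.imp j i ∈ L))) ∧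
  (∀ i : Fin k, ImpFactor.imp i i ∉ L)

/-- Factors of the forms `Δ_c(x_i)` or `EQ(x_i,x_j)`. -/
inductive EqFactor (k : ℕ) where
  | delta (c : Bool) (i : Fin k)
  | eq (i j : Fin k)
deriving DecidableEq

/-- Evaluation of such a factor at an assignment. -/
def EqFactor.eval {k : ℕ} : EqFactor k → (Fin k → Bool) → Bool
  | .delta c i, x => x i == c
  | .eq i j, x => x i == x j

/-- `f` is in simple form: its representing Boolean matrix (rows indexed by `R_f`) has
no all-`0` column, no all-`1` column, and no two identical columns. -/
def simpleForm {k : ℕ} (f : Constraint k) : Prop :=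
  (∀ i : Fin k, ∃ a, f a ≠ 0 ∧ a i = true) ∧
  (∀ i : Fin k, ∃ a, f a ≠ 0 ∧ a i = false) ∧
  (∀ i j : Fin k, i ≠ j → ∃ a, f a ≠ 0 ∧ a i ≠ a j)

/-- A constraint of unspecified arity. -/
abbrev Ctr : Type := Σ k : ℕ, Constraint k

/-- T-constructibility of a constraint from a set `G` of constraints, by finitely many
applications of permutation, pinning, projection, linking, expansion, multiplication,
and normalization. -/
inductive TCon (G : Set Ctr) : Ctr → Prop where
  | base {c : Ctr} : c ∈ G → TCon G c
  | perm {k : ℕ} {g : Constraint k} (σ : Equiv.Perm (Fin k)) :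
      TCon G ⟨k, g⟩ → TCon G ⟨k, fun x => g (fun i => x (σ i))⟩
  | pinning {k : ℕ} {g : Constraint (k+1)} (i : Fin (k+1)) (c : Bool) :
      TCon G ⟨k+1, g⟩ → TCon G ⟨k, fun x => g (i.insertNth c x)⟩
  | proj {k : ℕ} {g : Constraint (k+1)} (i : Fin (k+1)) :
      TCon G ⟨k+1, g⟩ →
      TCon G ⟨k, fun x => g (i.insertNth false x) + g (i.insertNth true x)⟩
  | link {k : ℕ} {g : Constraint (k+1)} (i : Fin (k+1)) (j : Fin k) :
      TCon G ⟨k+1, g⟩ → TCon G ⟨k, fun x => g (i.insertNth (x j) x)⟩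
  | expand {k : ℕ} {g : Constraint k} (i : Fin (k+1)) :
      TCon G ⟨k, g⟩ → TCon G ⟨k+1, fun x => g (fun j => x (i.succAbove j))⟩
  | mul {k : ℕ} {g₁ g₂ : Constraint k} :
      TCon G ⟨k, g₁⟩ → TCon G ⟨k, g₂⟩ → TCon G ⟨k, fun x => g₁ x * g₂ x⟩
  | norm {k : ℕ} {g : Constraint k} (lam : ℂ) (hlam : lam ≠ 0) :
      TCon G ⟨k, g⟩ → TCon G ⟨k, fun x => lam * g x⟩

/-- T-constructibility using no projection operation. -/
inductive TConNoProj (G : Set Ctr) : Ctr → Prop where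
  | base {c : Ctr} : c ∈ G → TConNoProj G c
  | perm {k : ℕ} {g : Constraint k} (σ : Equiv.Perm (Fin k)) :
      TConNoProj G ⟨k, g⟩ → TConNoProj G ⟨k, fun x => g (fun i => x (σ i))⟩
  | pinning {k : ℕ} {g : Constraint (k+1)} (i : Fin (k+1)) (c : Bool) :
      TConNoProj G ⟨k+1, g⟩ → TConNoProj G ⟨k, fun x => g (i.insertNth c x)⟩
  | link {k : ℕ} {g : Constraint (k+1)} (i : Fin (k+1)) (j : Fin k) :
      TConNoProj G ⟨k+1, g⟩ → TConNoProj G ⟨k, fun x => g (i.insertNth (x j) x)⟩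
  | expand {k : ℕ} {g : Constraint k} (i : Fin (k+1)) :
      TConNoProj G ⟨k, g⟩ → TConNoProj G ⟨k+1, fun x => g (fun j => x (i.succAbove j))⟩
  | mul {k : ℕ} {g₁ g₂ : Constraint k} :
      TConNoProj G ⟨k, g₁⟩ → TConNoProj G ⟨k, g₂⟩ →
      TConNoProj G ⟨k, fun x => g₁ x * g₂ x⟩
  | norm {k : ℕ} {g : Constraint k} (lam : ℂ) (hlam : lam ≠ 0) :
      TConNoProj G ⟨k, g⟩ → TConNoProj G ⟨k, fun x => lam * g x⟩

/-- Pinning the `i`-th variable of `f` to the bit `c`. -/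
def pinC {k : ℕ} (f : Constraint (k+1)) (i : Fin (k+1)) (c : Bool) : Constraint k :=
  fun x => f (i.insertNth c x)

/-- `R_f` admits a good factor list: a factor list consisting only of `Implies` factors,
in which every variable is incident to at least one edge of the induced imp graph,
and whose imp graph has no (directed) cycle. -/
def hasGoodFactorList {k : ℕ} (f : Constraint k) : Prop :=
  ∃ L : List (ImpFactor k),
    isFactorListFor L (relOf f) ∧
    (∀ fac ∈ L, ∃ i j, fac = ImpFactor.imp i j) ∧
    (∀ i : Fin k, ∃ j, ImpFactor.imp i j ∈ L ∨ ImpFactor.imp j i ∈ L) ∧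
    ¬ ∃ i : Fin k, Relation.TransGen (fun a b => ImpFactor.imp a b ∈ L) i i

/-- Transport along equality of constraints. -/
theorem TCon.congr_fun' {G : Set Ctr} {k : ℕ} {f g : Constraint k} (h : TCon G ⟨k, f⟩)
    (e : ∀ x, f x = g x) : TCon G ⟨k, g⟩ := by
  have : f = g := funext e
  exact this ▸ h

/-- Matrix product of two binary constraints, by expansion, multiplication, projection. -/
theorem TCon.comp {G : Set Ctr} {f g : Constraint 2} (hf : TCon G ⟨2, f⟩)
    (hg : TCon G ⟨2, g⟩) :
    TCon G ⟨2, fun x => f ![x 0, false] * g ![false, x 1] + f ![x 0, true] * g ![true, x 1]⟩ := by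
  refine TCon.congr_fun' (TCon.proj (k := 2) 1 (TCon.mul (TCon.expand 2 hf) (TCon.expand 0 hg))) ?_
  intro x
  have a : ∀ c : Bool, (fun j => ((1 : Fin 3).insertNth c x : Fin 3 → Bool) ((2 : Fin 3).succAbove j))
      = ![x 0, c] := by
    intro c; funext j; fin_cases j <;> rfl
  have b : ∀ c : Bool, (fun j => ((1 : Fin 3).insertNth c x : Fin 3 → Bool) ((0 : Fin 3).succAbove j))
      = ![c, x 1] := by
    intro c; funext j; fin_cases j <;> rfl
  simp only [a, b]

/-- Multiplying by a unary constraint on the first variable. -/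
theorem TCon.mulFst {G : Set Ctr} {f : Constraint 2} {u : Constraint 1} (hf : TCon G ⟨2, f⟩)
    (hu : TCon G ⟨1, u⟩) : TCon G ⟨2, fun x => f x * u ![x 0]⟩ := by
  refine TCon.congr_fun' (TCon.mul hf (TCon.expand 1 hu)) ?_
  intro x
  have a : (fun j => x ((1 : Fin 2).succAbove j)) = ![x 0] := by
    funext j; fin_cases j; rfl
  simp only [a]

/-- Multiplying by a unary constraint on the second variable. -/
theorem TCon.mulSnd {G : Set Ctr} {f : Constraint 2} {u : Constraint 1} (hf : TCon G ⟨2, f⟩)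
    (hu : TCon G ⟨1, u⟩) : TCon G ⟨2, fun x => f x * u ![x 1]⟩ := by
  refine TCon.congr_fun' (TCon.mul hf (TCon.expand 0 hu)) ?_
  intro x
  have a : (fun j => x ((0 : Fin 2).succAbove j)) = ![x 1] := by
    funext j; fin_cases j; rfl
  simp only [a]

/-- There exists a finite set `G` of unary constraints such that
`Implies = (1,1,0,1)` is T-constructible from `G ∪ {OR}`. -/
theorem stmt5 : ∃ G : Set Ctr, G.Finite ∧ (∀ c ∈ G, c.1 = 1) ∧
    TCon (G ∪ {⟨2, ORc⟩}) ⟨2, Impliesc⟩ := by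
  refine ⟨{⟨1, unC (-1) 1⟩, ⟨1, unC 1 2⟩, ⟨1, unC 1 (1/2)⟩}, by simp, ?_, ?_⟩
  · rintro c (rfl | rfl | rfl) <;> rfl
  · generalize hG : (({⟨1, unC (-1) 1⟩, ⟨1, unC 1 2⟩, ⟨1, unC 1 (1/2)⟩} : Set Ctr)
      ∪ {⟨2, ORc⟩}) = G
    have h1 : TCon G ⟨1, unC (-1) 1⟩ := .base (by rw [← hG]; simp)
    have h2 : TCon G ⟨1, unC 1 2⟩ := .base (by rw [← hG]; simp)
    have h3 : TCon G ⟨1, unC 1 (1/2)⟩ := .base (by rw [← hG]; simp)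
    have hor : TCon G ⟨2, ORc⟩ := .base (by rw [← hG]; simp)
    have hnand : TCon G ⟨2, binC 1 1 1 0⟩ := by
      refine TCon.congr_fun' ((hor.mulSnd h1).comp hor) ?_
      intro x
      cases hx : x 0 <;> cases hy : x 1 <;> simp [ORc, binC, unC, hx, hy]
    refine TCon.congr_fun' (((hnand.comp hor).mulFst h2).mulSnd h3) ?_
    intro x
    cases hx : x 0 <;> cases hy : x 1 <;> norm_num [Impliesc, ORc, binC, unC, hx, hy]
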